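/- arXiv:1407.4316 — 4 statements merged into one kernel-verified Lean document; each statement's English description precedes it below -/
import Mathlib

section
/- Let F be a field of characteristic zero, N ≥ 1, and g ∈ GL_N(F). Set θ(g) = (g⁻¹)ᵀ. Then the 2N×2N block matrix i(gθ) = [[0, g],[θ(g), 0]] is semisimple if and only if the N×N matrix g·θ(g) is semisimple. -/
open scoped Matrix

/-- A square matrix over a field is semisimple if the linear endomorphism it induces is
semisimple. -/
def Matrix.IsSemisimple {F : Type*} [Field F] {m : Type*} [Fintype m] [DecidableEq m]
    (g : Matrix m m F) : Prop :=
  Module.End.IsSemisimple (Matrix.toLin' g)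

namespace Matrix

open Polynomial

section CommRing

variable {R : Type*} [CommRing R] {m n : Type*} [Fintype m] [DecidableEq m] [Fintype n]
  [DecidableEq n]

lemma aeval_fromBlocks_diagonal (A : Matrix m m R) (D : Matrix n n R) (p : R[X]) :
    aeval (fromBlocks A 0 0 D) p = fromBlocks (aeval A p) 0 0 (aeval D p) := by
  induction p using Polynomial.induction_on' with
  | add p q hp hq => simp [hp, hq, fromBlocks_add]
  | monomial k a =>
    simp only [aeval_monomial, fromBlocks_diagonal_pow, ← Algebra.smul_def, fromBlocks_smul,
      smul_zero]

lemma mul_aeval_mul_comm (A : Matrix m n R) (B : Matrix n m R) (p : R[X]) :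
    A * aeval (B * A) p = aeval (A * B) p * A := by
  have hpow (k : ℕ) : A * (B * A) ^ k = (A * B) ^ k * A := by
    induction k with
    | zero => simp
    | succ k ih => rw [pow_succ, ← Matrix.mul_assoc, ih, pow_succ]; simp only [Matrix.mul_assoc]
  induction p using Polynomial.induction_on' with
  | add p q hp hq => simp [hp, hq, Matrix.mul_add, Matrix.add_mul]
  | monomial k a => simp [aeval_monomial, ← Algebra.smul_def, hpow]

lemma aeval_expand_two_fromBlocks_antidiagonal (A : Matrix m n R) (B : Matrix n m R) (p : R[X]) :
    aeval (fromBlocks 0 A B 0) (expand R 2 p) =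
      fromBlocks (aeval (A * B) p) 0 0 (aeval (B * A) p) := by
  rw [expand_aeval, pow_two, fromBlocks_multiply, ← aeval_fromBlocks_diagonal]
  simp

end CommRing

section Field

variable {F : Type*} [Field F] {m n : Type*} [Fintype m] [DecidableEq m] [Fintype n]
  [DecidableEq n]

lemma aeval_toLin' (A : Matrix m m F) (p : F[X]) :
    aeval (toLin' A) p = toLin' (aeval A p) :=
  aeval_algHom_apply (toLinAlgEquiv' (R := F) (n := m)) A p

lemma isSemisimple_of_squarefree_aeval_eq_zero {A : Matrix m m F} {p : F[X]}
    (hp : Squarefree p) (h : aeval A p = 0) : A.IsSemisimple :=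
  Module.End.isSemisimple_of_squarefree_aeval_eq_zero hp (by rw [aeval_toLin', h, map_zero])

lemma IsSemisimple.minpoly_squarefree {A : Matrix m m F} (h : A.IsSemisimple) :
    Squarefree (minpoly F A) := by
  rw [← minpoly_toLin']
  exact Module.End.IsSemisimple.minpoly_squarefree h

lemma IsSemisimple.pow {A : Matrix m m F} (h : A.IsSemisimple) (k : ℕ) :
    (A ^ k).IsSemisimple := by
  unfold IsSemisimple at *
  rw [toLin'_pow]
  exact Module.End.IsSemisimple.pow h k

lemma isCoprime_minpoly_X {A : Matrix m m F} (hA : IsUnit A) : IsCoprime (minpoly F A) X := by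
  refine ((irreducible_X.coprime_iff_not_dvd).2 fun ⟨q, hq⟩ => ?_).symm
  have hne := minpoly.ne_zero (Matrix.isIntegral A)
  have hq0 : q ≠ 0 := by rintro rfl; simp [hq] at hne
  have hqA : aeval A q = 0 := by
    have h := minpoly.aeval F A
    rw [hq, map_mul, aeval_X] at h
    exact hA.mul_right_eq_zero.1 h
  have hdeg := natDegree_le_of_dvd (minpoly.dvd F A hqA) hq0
  rw [hq, natDegree_X_mul hq0] at hdeg
  omega

lemma _root_.Polynomial.Separable.expand_two [NeZero (2 : F)] {p : F[X]} (hp : p.Separable)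
    (hX : IsCoprime p X) : (expand F 2 p).Separable := by
  have h2 : IsUnit (2 : F[X]) := by
    rw [← C_ofNat, isUnit_C]
    exact (NeZero.ne (2 : F)).isUnit
  have hX' : IsCoprime (expand F 2 p) (X ^ 2) := by
    simpa using hX.map (expand F 2).toRingHom
  rw [Polynomial.Separable, derivative_expand]
  refine IsCoprime.mul_right (IsCoprime.map hp (expand F 2).toRingHom) (IsCoprime.mul_right ?_ ?_)
  · exact_mod_cast isCoprime_one_right.of_isCoprime_of_dvd_right h2.dvd
  · simpa using (IsCoprime.pow_right_iff two_pos).1 hX'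

lemma IsSemisimple.mul_of_fromBlocks_antidiagonal {A : Matrix m n F} {B : Matrix n m F}
    (h : (fromBlocks 0 A B 0).IsSemisimple) : (A * B).IsSemisimple := by
  refine isSemisimple_of_squarefree_aeval_eq_zero (h.pow 2).minpoly_squarefree ?_
  have hp := minpoly.aeval F (fromBlocks 0 A B 0 ^ 2)
  rw [← expand_aeval, aeval_expand_two_fromBlocks_antidiagonal, ← fromBlocks_zero,
    fromBlocks_inj] at hp
  exact hp.1

lemma IsSemisimple.fromBlocks_antidiagonal [CharZero F] {A B : Matrix m m F} (hA : IsUnit A)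
    (hB : IsUnit B) (h : (A * B).IsSemisimple) : (fromBlocks 0 A B 0).IsSemisimple := by
  have hsep : (minpoly F (A * B)).Separable :=
    PerfectField.separable_iff_squarefree.2 h.minpoly_squarefree
  refine isSemisimple_of_squarefree_aeval_eq_zero
    (hsep.expand_two (isCoprime_minpoly_X (hA.mul hB))).squarefree ?_
  have hBA : aeval (B * A) (minpoly F (A * B)) = 0 := by
    refine hA.mul_right_eq_zero.1 ?_
    rw [mul_aeval_mul_comm, minpoly.aeval, Matrix.zero_mul]
  rw [aeval_expand_two_fromBlocks_antidiagonal, minpoly.aeval, hBA, fromBlocks_zero]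

end Field

end Matrix

/-- For `g ∈ GL_N(F)` and `θ(g) = (g⁻¹)ᵀ`, the block matrix `[[0, g],[θ(g), 0]]` is
semisimple if and only if `g * θ(g)` is semisimple. -/
theorem stmt_2 {F : Type*} [Field F] [CharZero F] {N : ℕ} (hN : 1 ≤ N)
    (g : GL (Fin N) F) :
    (Matrix.fromBlocks 0 (g : Matrix (Fin N) (Fin N) F)
        (((g⁻¹ : GL (Fin N) F) : Matrix (Fin N) (Fin N) F)ᵀ) 0).IsSemisimple ↔
    ((g : Matrix (Fin N) (Fin N) F) *
        ((g⁻¹ : GL (Fin N) F) : Matrix (Fin N) (Fin N) F)ᵀ).IsSemisimple := by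
  have hθ : IsUnit ((g⁻¹ : GL (Fin N) F) : Matrix (Fin N) (Fin N) F)ᵀ :=
    (Matrix.isUnit_transpose _).2 (Units.isUnit g⁻¹)
  exact ⟨fun h => h.mul_of_fromBlocks_antidiagonal, fun h => h.fromBlocks_antidiagonal g.isUnit hθ⟩
end

section
/- Let F be a field of characteristic zero, γ ∈ M_n(F) a semisimple matrix, and M = {g ∈ GL_n(F) : gγ = γg} the centralizer of γ in GL_n(F). Let N, N' ∈ M_n(F) be nilpotent matrices each commuting with γ. Then γ + N and γ + N' are conjugate under GL_n(F) if and only if N and N' are conjugate under M. -/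
/-- Semisimplicity of a matrix is invariant under conjugation by invertible matrices. -/
theorem Matrix.IsSemisimple.conj {F : Type*} [Field F] {m : Type*} [Fintype m] [DecidableEq m]
    {γ : Matrix m m F} (hγ : γ.IsSemisimple) (g : GL m F) :
    ((g : Matrix m m F) * γ * ((g⁻¹ : GL m F) : Matrix m m F)).IsSemisimple := by
  let e : (m → F) ≃ₗ[F] (m → F) := Matrix.toLin'OfInv g.inv_mul g.mul_inv
  have he : (e : (m → F) →ₗ[F] (m → F)) = Matrix.toLin' (g : Matrix m m F) := rfl
  refine (LinearEquiv.isSemisimple_iff (Matrix.toLin' γ) _ e ?_).mp hγ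
  rw [he, ← Matrix.toLin'_mul, ← Matrix.toLin'_mul, Units.inv_mul_cancel_right]

/-- Uniqueness of the Jordan–Chevalley decomposition of a matrix over a perfect field. -/
theorem Matrix.isNilpotent_isSemisimple_unique {F : Type*} [Field F] [PerfectField F]
    {m : Type*} [Fintype m] [DecidableEq m] {N₁ S₁ N₂ S₂ : Matrix m m F}
    (hN₁ : IsNilpotent N₁) (hS₁ : S₁.IsSemisimple)
    (hN₂ : IsNilpotent N₂) (hS₂ : S₂.IsSemisimple)
    (hc₁ : Commute N₁ S₁) (hc₂ : Commute N₂ S₂) (h : N₁ + S₁ = N₂ + S₂) :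
    N₁ = N₂ ∧ S₁ = S₂ := by
  have key := Module.End.isNilpotent_isSemisimple_unique
    (hN₁.map Matrix.toLinAlgEquiv') (s₁ := Matrix.toLinAlgEquiv' S₁) hS₁
    (hN₂.map Matrix.toLinAlgEquiv') (s₂ := Matrix.toLinAlgEquiv' S₂) hS₂
    (hc₁.map Matrix.toLinAlgEquiv') (hc₂.map Matrix.toLinAlgEquiv')
    (by simpa using congrArg Matrix.toLinAlgEquiv' h)
  exact ⟨Matrix.toLinAlgEquiv'.injective key.1, Matrix.toLinAlgEquiv'.injective key.2⟩

/-- Let `γ` be semisimple and `N, N'` nilpotent matrices commuting with `γ`.  Then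
`γ + N` and `γ + N'` are conjugate under `GL_n(F)` if and only if `N` and `N'` are
conjugate under the centralizer `M = {g ∈ GL_n(F) : g γ = γ g}` of `γ`. -/
theorem stmt_8 {F : Type*} [Field F] [CharZero F] {n : ℕ}
    (γ N N' : Matrix (Fin n) (Fin n) F) (hγ : γ.IsSemisimple)
    (hN : IsNilpotent N) (hN' : IsNilpotent N')
    (hNγ : N * γ = γ * N) (hN'γ : N' * γ = γ * N') :
    (∃ g : GL (Fin n) F, γ + N' =
        (g : Matrix (Fin n) (Fin n) F) * (γ + N) *
          ((g⁻¹ : GL (Fin n) F) : Matrix (Fin n) (Fin n) F)) ↔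
    (∃ m : GL (Fin n) F, (m : Matrix (Fin n) (Fin n) F) * γ = γ * (m : Matrix (Fin n) (Fin n) F) ∧
        N' = (m : Matrix (Fin n) (Fin n) F) * N *
          ((m⁻¹ : GL (Fin n) F) : Matrix (Fin n) (Fin n) F)) := by
  constructor
  · rintro ⟨g, hg⟩
    have hnil : IsNilpotent ((g : Matrix (Fin n) (Fin n) F) * N *
        ((g⁻¹ : GL (Fin n) F) : Matrix (Fin n) (Fin n) F)) := by
      obtain ⟨k, hk⟩ := hN
      exact ⟨k, by rw [Units.conj_pow, hk, mul_zero, zero_mul]⟩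
    have hcomm : Commute ((g : Matrix (Fin n) (Fin n) F) * N *
          ((g⁻¹ : GL (Fin n) F) : Matrix (Fin n) (Fin n) F))
        ((g : Matrix (Fin n) (Fin n) F) * γ *
          ((g⁻¹ : GL (Fin n) F) : Matrix (Fin n) (Fin n) F)) := by
      simp only [Commute, SemiconjBy, mul_assoc, Units.inv_mul_cancel_left]
      rw [← mul_assoc N, hNγ, mul_assoc]
    obtain ⟨hNN', hγγ⟩ := Matrix.isNilpotent_isSemisimple_unique hN' hγ hnil (hγ.conj g)
      hN'γ hcomm (by rw [add_comm, hg, mul_add, add_mul, add_comm])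
    refine ⟨g, ?_, hNN'⟩
    conv_rhs => rw [hγγ]
    rw [Units.inv_mul_cancel_right]
  · rintro ⟨g, hg, rfl⟩
    exact ⟨g, by rw [mul_add, add_mul, hg, Units.mul_inv_cancel_right]⟩
end

section
/- Let F be a nontrivially normed field of characteristic zero, γ ∈ M_n(F) a semisimple matrix, and X ∈ M_n(F) a matrix such that γ lies in the topological closure of the conjugation orbit {gXg⁻¹ : g ∈ GL_n(F)}. Then there exists a nilpotent matrix N ∈ M_n(F) commuting with γ such that X is conjugate under GL_n(F) to γ + N. -/
section

open Polynomial

/-- Adding a commuting nilpotent matrix does not change the characteristic polynomial. -/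
theorem Matrix.charpoly_add_of_isNilpotent_of_commute {R m : Type*} [CommRing R] [IsDomain R]
    [Fintype m] [DecidableEq m] {A N : Matrix m m R} (hN : IsNilpotent N) (hAN : Commute A N) :
    (A + N).charpoly = A.charpoly := by
  set M := A.charmatrix with hM
  set N' : Matrix m m R[X] := N.map C with hN'
  have hdet : M.det ≠ 0 := A.charpoly_monic.ne_zero
  have hMN : M * N' = N' * M := by
    have h : A.map C * N.map C = N.map C * A.map C := by
      rw [← Matrix.map_mul, ← Matrix.map_mul, hAN.eq]
    rw [hM, hN', Matrix.charmatrix, sub_mul, mul_sub]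
    simp only [RingHom.mapMatrix_apply]
    rw [h, Matrix.scalar_commute _ (Commute.all _) (N.map C)]
  have hadj : M.adjugate * N' = N' * M.adjugate := by
    have h : M.det • (M.adjugate * N') = M.det • (N' * M.adjugate) := by
      calc M.det • (M.adjugate * N') = M.adjugate * N' * (M * M.adjugate) := by
            rw [Matrix.mul_adjugate, Matrix.mul_smul, mul_one]
        _ = M.adjugate * (N' * M) * M.adjugate := by simp only [mul_assoc]
        _ = (M.adjugate * M) * (N' * M.adjugate) := by rw [← hMN]; simp only [mul_assoc]
        _ = _ := by rw [Matrix.adjugate_mul, Matrix.smul_mul, one_mul]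
    exact smul_right_injective _ hdet h
  have hnil : IsNilpotent (M.adjugate * N') :=
    Commute.isNilpotent_mul_left hadj (hN.map (C : R →+* R[X]).mapMatrix)
  have hchar : (M.adjugate * N').charpoly = X ^ Fintype.card m :=
    sub_eq_zero.mp (Matrix.isNilpotent_charpoly_sub_pow_of_isNilpotent hnil).eq_zero
  have hprod : M.adjugate.det * (M - N').det = M.adjugate.det * M.det := by
    have h := congrArg (eval M.det) hchar
    rw [Matrix.eval_charpoly, eval_pow, eval_X] at h
    rw [← Matrix.det_mul, ← Matrix.det_mul, mul_sub, Matrix.adjugate_mul, Matrix.det_smul,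
      Matrix.det_one, mul_one, ← h, Matrix.smul_one_eq_diagonal, Matrix.scalar_apply]
  have hadj0 : M.adjugate.det ≠ 0 := by
    rw [Matrix.det_adjugate]
    exact pow_ne_zero _ hdet
  have hsub : (A + N).charmatrix = M - N' := by
    simp [hM, hN', Matrix.charmatrix, sub_sub, Matrix.map_add]
  rw [Matrix.charpoly, hsub, mul_left_cancel₀ hadj0 hprod, Matrix.charpoly]

/-- An irreducible factor of the characteristic polynomial takes a singular value at the matrix. -/
theorem Matrix.not_isUnit_aeval_of_dvd_charpoly {F m : Type*} [Field F] [Fintype m]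
    [DecidableEq m] {A : Matrix m m F} {q : F[X]} (hq : Irreducible q) (hqA : q ∣ A.charpoly) :
    ¬ IsUnit (aeval A q) := by
  intro hu
  have : Fact (Irreducible q) := ⟨hq⟩
  let φ : F →+* AdjoinRoot q := AdjoinRoot.of q
  have hroot : (A.map φ).charpoly.IsRoot (AdjoinRoot.root q) := by
    rw [Matrix.charpoly_map]
    exact (AdjoinRoot.isRoot_root q).dvd (Polynomial.map_dvd φ hqA)
  have hmem := spectrum.subset_polynomial_aeval (A.map φ) (q.map φ)
    ⟨_, Matrix.mem_spectrum_of_isRoot_charpoly hroot, rfl⟩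
  have heval : eval (AdjoinRoot.root q) (q.map φ) = 0 := AdjoinRoot.isRoot_root q
  simp only [heval] at hmem
  rw [spectrum.zero_mem_iff] at hmem
  apply hmem
  have hmap : aeval (A.map φ) (q.map φ) = φ.mapMatrix (aeval A q) := by
    rw [aeval_def, aeval_def, eval₂_map, Polynomial.hom_eval₂]
    congr 1
    ext
    simp [Matrix.algebraMap_matrix_apply, apply_ite φ]
  rw [hmap]
  exact hu.map _

section PolynomialModule

variable {F : Type*} [Field F]
  {M : Type*} [AddCommGroup M] [Module F M] [Module F[X] M] [IsScalarTower F F[X] M]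
  {N : Type*} [AddCommGroup N] [Module F N] [Module F[X] N] [IsScalarTower F F[X] N]

theorem Polynomial.aeval_lsmul_X_apply (q : F[X]) (v : M) :
    aeval (Algebra.lsmul F F M (X : F[X])) q v = q • v := by
  rw [aeval_algHom_apply, aeval_X_left_apply, Algebra.lsmul_coe]

variable [FiniteDimensional F M] [FiniteDimensional F N]

instance Submodule.finiteDimensional_of_polynomial (S : Submodule F[X] M) :
    FiniteDimensional F S :=
  inferInstanceAs (FiniteDimensional F (S.restrictScalars F))

theorem Polynomial.charpoly_lsmul_X_smul (v : M) :
    (Algebra.lsmul F F M (X : F[X])).charpoly • v = 0 := by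
  rw [← aeval_lsmul_X_apply, LinearMap.aeval_self_charpoly, LinearMap.zero_apply]

theorem LinearEquiv.charpoly_lsmul_X_eq (e : M ≃ₗ[F[X]] N) :
    (Algebra.lsmul F F M (X : F[X])).charpoly = (Algebra.lsmul F F N (X : F[X])).charpoly := by
  rw [← (e.restrictScalars F).charpoly_conj]
  congr 1
  ext v
  simp [LinearEquiv.conj_apply]

theorem Polynomial.charpoly_lsmul_X_of_isCompl {S T : Submodule F[X] M} (h : IsCompl S T) :
    (Algebra.lsmul F F M (X : F[X])).charpoly =
      (Algebra.lsmul F F S (X : F[X])).charpoly * (Algebra.lsmul F F T (X : F[X])).charpoly := by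
  rw [← (Submodule.prodEquivOfIsCompl S T h).charpoly_lsmul_X_eq, ← LinearMap.charpoly_prodMap]
  rfl

/-- A polynomial dividing the characteristic polynomial of multiplication by `X` annihilates
a nonzero vector. -/
theorem Polynomial.exists_smul_eq_zero_of_dvd_charpoly {q : F[X]} (hq : Irreducible q)
    (h : q ∣ (Algebra.lsmul F F N (X : F[X])).charpoly) : ∃ w : N, w ≠ 0 ∧ q • w = 0 := by
  by_contra! hinj
  set f := Algebra.lsmul F F N (X : F[X])
  let b := Module.finBasis F N
  rw [← LinearMap.charpoly_toMatrix f b] at h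
  refine Matrix.not_isUnit_aeval_of_dvd_charpoly hq h ?_
  change IsUnit (aeval (LinearMap.toMatrixAlgEquiv b f) q)
  rw [aeval_algHom_apply]
  refine IsUnit.map _ ((LinearMap.isUnit_iff_ker_eq_bot _).mpr ?_)
  rw [LinearMap.ker_eq_bot']
  intro w hw
  rw [aeval_lsmul_X_apply] at hw
  by_contra hw0
  exact hinj w hw0 hw

end PolynomialModule

/-- Semisimple finite-dimensional `F[X]`-modules are determined by the characteristic polynomial
of multiplication by `X`. -/
theorem Polynomial.nonempty_linearEquiv_of_charpoly_eq {F : Type*} [Field F] (d : ℕ)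
    {M : Type*} [AddCommGroup M] [Module F M] [Module F[X] M] [IsScalarTower F F[X] M]
    {N : Type*} [AddCommGroup N] [Module F N] [Module F[X] N] [IsScalarTower F F[X] N]
    [FiniteDimensional F M] [FiniteDimensional F N]
    [IsSemisimpleModule F[X] M] [IsSemisimpleModule F[X] N]
    (hd : Module.finrank F M = d)
    (h : (Algebra.lsmul F F M (X : F[X])).charpoly = (Algebra.lsmul F F N (X : F[X])).charpoly) :
    Nonempty (M ≃ₗ[F[X]] N) := by
  induction d using Nat.strong_induction_on generalizing M N with
  | _ d ih =>
  have hrank : Module.finrank F M = Module.finrank F N := by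
    have := congrArg natDegree h
    rwa [LinearMap.charpoly_natDegree, LinearMap.charpoly_natDegree] at this
  rcases subsingleton_or_nontrivial M with hM | hM
  · have : Subsingleton N := by
      rw [← Module.finrank_zero_iff (R := F), ← hrank, Module.finrank_zero_of_subsingleton]
    exact ⟨0⟩
  · obtain ⟨S, hS⟩ := IsSemisimpleModule.exists_simple_submodule F[X] M
    have := IsSimpleModule.nontrivial F[X] S
    obtain ⟨v, hv⟩ := exists_ne (0 : S)
    have hmax := IsSimpleModule.ker_toSpanSingleton_isMaximal F[X] hv
    set I := LinearMap.ker (LinearMap.toSpanSingleton F[X] S v) with hI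
    obtain ⟨q, hqI⟩ := (IsPrincipalIdealRing.principal I).principal
    have hcharI : (Algebra.lsmul F F M (X : F[X])).charpoly ∈ I := by
      rw [hI, LinearMap.mem_ker, LinearMap.toSpanSingleton_apply]
      exact Subtype.ext (charpoly_lsmul_X_smul (v : M))
    have hqdvd : q ∣ (Algebra.lsmul F F M (X : F[X])).charpoly := by
      rw [hqI] at hcharI
      exact Ideal.mem_span_singleton.mp hcharI
    have hq0 : q ≠ 0 := fun h0 =>
      (LinearMap.charpoly_monic _).ne_zero (zero_dvd_iff.mp (h0 ▸ hqdvd))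
    have hq : Irreducible q := by
      have : (Ideal.span {q}).IsPrime := by
        rw [← Ideal.submodule_span_eq, ← hqI]
        exact hmax.isPrime
      exact ((Ideal.span_singleton_prime hq0).mp this).irreducible
    obtain ⟨w, hw0, hw⟩ := exists_smul_eq_zero_of_dvd_charpoly hq (h ▸ hqdvd)
    have hJ : I = LinearMap.ker (LinearMap.toSpanSingleton F[X] N w) := by
      refine hmax.eq_of_le ?_ ?_
      · rw [Ideal.ne_top_iff_one, LinearMap.mem_ker, LinearMap.toSpanSingleton_apply, one_smul]
        exact hw0
      · rw [hqI, Submodule.span_singleton_le_iff_mem, LinearMap.mem_ker,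
          LinearMap.toSpanSingleton_apply]
        exact hw
    set T := LinearMap.range (LinearMap.toSpanSingleton F[X] N w)
    let e₁ : S ≃ₗ[F[X]] T :=
      (LinearMap.quotKerEquivOfSurjective _
        (IsSimpleModule.toSpanSingleton_surjective F[X] hv)).symm ≪≫ₗ
      Submodule.quotEquivOfEq _ _ hJ ≪≫ₗ LinearMap.quotKerEquivRange _
    obtain ⟨S₁, hcS⟩ := exists_isCompl S
    obtain ⟨T₁, hcT⟩ := exists_isCompl T
    have hchar : (Algebra.lsmul F F S₁ (X : F[X])).charpoly =
        (Algebra.lsmul F F T₁ (X : F[X])).charpoly := by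
      rw [charpoly_lsmul_X_of_isCompl hcS, charpoly_lsmul_X_of_isCompl hcT,
        e₁.charpoly_lsmul_X_eq] at h
      exact mul_left_cancel₀ (LinearMap.charpoly_monic _).ne_zero h
    have hlt : Module.finrank F S₁ < d := by
      have hsum := ((Submodule.prodEquivOfIsCompl S S₁ hcS).restrictScalars F).finrank_eq
      rw [Module.finrank_prod, hd] at hsum
      have : 0 < Module.finrank F S := Module.finrank_pos
      omega
    obtain ⟨e₂⟩ := ih _ hlt rfl hchar
    exact ⟨(Submodule.prodEquivOfIsCompl S S₁ hcS).symm ≪≫ₗ e₁.prodCongr e₂ ≪≫ₗ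
      Submodule.prodEquivOfIsCompl T T₁ hcT⟩

/-- Semisimple endomorphisms with the same characteristic polynomial are conjugate. -/
theorem Module.End.IsSemisimple.exists_conj_eq_of_charpoly_eq {F V : Type*} [Field F]
    [AddCommGroup V] [Module F V] [FiniteDimensional F V] {s t : Module.End F V}
    (hs : s.IsSemisimple) (ht : t.IsSemisimple) (h : s.charpoly = t.charpoly) :
    ∃ e : V ≃ₗ[F] V, e.conj s = t := by
  have hconj (f : Module.End F V) :
      (Algebra.lsmul F F (Module.AEval' f) (X : F[X])).charpoly = f.charpoly := by
    rw [← (Module.AEval'.of f).charpoly_conj]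
    congr 1
    ext v
    obtain ⟨v, rfl⟩ := (Module.AEval'.of f).surjective v
    simp [LinearEquiv.conj_apply, Module.AEval'.X_smul_of]
  have : IsSemisimpleModule F[X] (Module.AEval' s) := hs
  have : IsSemisimpleModule F[X] (Module.AEval' t) := ht
  obtain ⟨e⟩ := nonempty_linearEquiv_of_charpoly_eq _ (M := Module.AEval' s)
    (N := Module.AEval' t) rfl (by rw [hconj, hconj, h])
  let e' : V ≃ₗ[F] V :=
    Module.AEval'.of s ≪≫ₗ e.restrictScalars F ≪≫ₗ (Module.AEval'.of t).symm
  have hof (u : V) : Module.AEval'.of t (e' u) = e (Module.AEval'.of s u) :=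
    (Module.AEval'.of t).apply_symm_apply _
  have he' (u : V) : e' (s u) = t (e' u) := by
    apply (Module.AEval'.of t).injective
    rw [hof, ← Module.AEval'.X_smul_of, ← Module.AEval'.X_smul_of, hof, map_smul]
  refine ⟨e', LinearMap.ext fun v => ?_⟩
  rw [LinearEquiv.conj_apply_apply, he', LinearEquiv.apply_symm_apply]

theorem Matrix.charpoly_eq_of_mem_closure_orbit {F m : Type*} [Field F] [Infinite F]
    [TopologicalSpace F] [IsTopologicalRing F] [T1Space F] [Fintype m] [DecidableEq m]
    {A B : Matrix m m F}
    (h : A ∈ closure {Y : Matrix m m F | ∃ g : GL m F,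
      Y = (g : Matrix m m F) * B * ((g⁻¹ : GL m F) : Matrix m m F)}) :
    A.charpoly = B.charpoly := by
  refine Polynomial.funext fun t => ?_
  have hcl : IsClosed {Y : Matrix m m F | Y.charpoly.eval t = B.charpoly.eval t} := by
    simp only [Matrix.eval_charpoly _ t]
    exact isClosed_singleton.preimage
      (f := fun Y : Matrix m m F => (Matrix.scalar m t - Y).det)
      (continuous_const.sub continuous_id).matrix_det
  refine closure_minimal ?_ hcl h
  rintro _ ⟨g, rfl⟩
  rw [Set.mem_ofPred_eq, Matrix.coe_units_inv, Matrix.charpoly_units_conj]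

end

/-- Over a nontrivially normed field of characteristic zero, if a semisimple matrix `γ`
lies in the closure of the conjugation orbit of `X`, then `X` is conjugate to `γ + N`
for some nilpotent matrix `N` commuting with `γ`. -/
theorem stmt_10 {F : Type*} [NontriviallyNormedField F] [CharZero F] {n : ℕ}
    (γ X : Matrix (Fin n) (Fin n) F) (hγ : γ.IsSemisimple)
    (hX : γ ∈ closure
      {Y : Matrix (Fin n) (Fin n) F | ∃ g : GL (Fin n) F,
        Y = (g : Matrix (Fin n) (Fin n) F) * X *
          ((g⁻¹ : GL (Fin n) F) : Matrix (Fin n) (Fin n) F)}) :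
    ∃ N : Matrix (Fin n) (Fin n) F, IsNilpotent N ∧ N * γ = γ * N ∧
      ∃ g : GL (Fin n) F, X = (g : Matrix (Fin n) (Fin n) F) * (γ + N) *
        ((g⁻¹ : GL (Fin n) F) : Matrix (Fin n) (Fin n) F) := by
  have hchar : γ.charpoly = X.charpoly := Matrix.charpoly_eq_of_mem_closure_orbit hX
  obtain ⟨ν, hν, s, hs, hνnil, hss, hsum⟩ :=
    Module.End.exists_isNilpotent_isSemisimple (f := Matrix.toLin' X)
  have hcomm : Commute s ν :=
    Algebra.commute_of_mem_adjoin_singleton_of_commute hν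
      (Algebra.commute_of_mem_adjoin_self hs).symm
  have hschar : s.charpoly = (Matrix.toLin' γ).charpoly := by
    have h := Matrix.charpoly_add_of_isNilpotent_of_commute
      (hνnil.map LinearMap.toMatrixAlgEquiv') (hcomm.map LinearMap.toMatrixAlgEquiv')
    rw [← map_add, add_comm, ← hsum] at h
    rw [Matrix.charpoly_toLin', hchar, ← Matrix.toLin'_toMatrix' s, Matrix.charpoly_toLin']
    exact h.symm.trans (congrArg _ (LinearMap.toMatrix'_toLin' X))
  obtain ⟨e, he⟩ := hss.exists_conj_eq_of_charpoly_eq hγ hschar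
  have hinv : LinearMap.toMatrix' (e : (Fin n → F) →ₗ[F] (Fin n → F)) *
      LinearMap.toMatrix' (e.symm : (Fin n → F) →ₗ[F] (Fin n → F)) = 1 := by
    simp [← LinearMap.toMatrix'_comp]
  have hinv' : LinearMap.toMatrix' (e.symm : (Fin n → F) →ₗ[F] (Fin n → F)) *
      LinearMap.toMatrix' (e : (Fin n → F) →ₗ[F] (Fin n → F)) = 1 := by
    simp [← LinearMap.toMatrix'_comp]
  have hγ' : γ = LinearMap.toMatrix' (e.conj s) := by rw [he, LinearMap.toMatrix'_toLin']
  refine ⟨LinearMap.toMatrix' (e.conj ν), ?_, ?_, ⟨_, _, hinv', hinv⟩, ?_⟩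
  · exact (hνnil.map (e.conjAlgEquiv F)).map LinearMap.toMatrixAlgEquiv'
  · exact hγ' ▸ (((hcomm.map (e.conjAlgEquiv F)).map LinearMap.toMatrixAlgEquiv').symm).eq
  · change X = LinearMap.toMatrix' (e.symm : (Fin n → F) →ₗ[F] (Fin n → F)) * _ *
      LinearMap.toMatrix' (e : (Fin n → F) →ₗ[F] (Fin n → F))
    rw [hγ', ← map_add, ← map_add, add_comm s, ← hsum, ← LinearMap.toMatrix'_comp,
      ← LinearMap.toMatrix'_comp, ← LinearMap.toMatrix'_toLin' X]
    congr 1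
    ext v
    simp [LinearEquiv.conj_apply]
end

section
/- Let F be any field and A, B ∈ M_n(F) two semisimple matrices with equal characteristic polynomials. Then A and B are conjugate in GL_n(F): there exists g ∈ GL_n(F) with B = gAg⁻¹. -/
open Polynomial in
/-- An irreducible factor `p` of the characteristic polynomial of `T` annihilates a nonzero
vector under `p(T)`. -/
theorem LinearMap.exists_ne_zero_aeval_apply_eq_zero_of_dvd_charpoly {F V : Type*} [Field F]
    [AddCommGroup V] [Module F V] [FiniteDimensional F V] (T : Module.End F V) {p : F[X]}
    (hp : Irreducible p) (hdvd : p ∣ T.charpoly) : ∃ v : V, v ≠ 0 ∧ aeval T p v = 0 := by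
  have : Fact (Irreducible p) := ⟨hp⟩
  let L := AdjoinRoot p
  have hroot : (T.baseChange L).charpoly.IsRoot (AdjoinRoot.root p) := by
    rw [LinearMap.charpoly_baseChange]
    exact (AdjoinRoot.isRoot_root p).dvd (Polynomial.map_dvd _ hdvd)
  have hspec := (Module.End.mem_spectrum_iff_isRoot_charpoly _ _).2 hroot
  have hzero : (0 : L) ∈ spectrum L (aeval (T.baseChange L) (p.map (algebraMap F L))) := by
    have h := spectrum.subset_polynomial_aeval (T.baseChange L) (p.map (algebraMap F L))
      ⟨_, hspec, rfl⟩
    have he : eval (AdjoinRoot.root p) (p.map (algebraMap F L)) = 0 := AdjoinRoot.isRoot_root p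
    simpa only [he] using h
  have haeval : aeval (T.baseChange L) (p.map (algebraMap F L)) =
      (aeval T p).baseChange L := by
    rw [aeval_map_algebraMap]
    exact aeval_algHom_apply (Module.End.baseChangeHom F L V) T p
  rw [haeval, spectrum.zero_mem_iff, LinearMap.isUnit_iff_isUnit_det,
    LinearMap.det_baseChange, isUnit_iff_ne_zero, not_not] at hzero
  have hdet : LinearMap.det (aeval T p) = 0 :=
    (algebraMap F L).injective (by simpa using hzero)
  obtain ⟨v, hv, hv0⟩ := (Submodule.ne_bot_iff _).1 (LinearMap.bot_lt_ker_of_det_eq_zero hdet).ne'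
  exact ⟨v, hv0, hv⟩

/-- Over a commutative ring, the torsion ideal of a nonzero element killed by a generator of a
maximal ideal is that ideal. -/
theorem Ideal.torsionOf_eq_span_singleton_of_isMaximal {R M : Type*} [CommRing R]
    [AddCommGroup M] [Module R M] {p : R} (hp : (Ideal.span {p}).IsMaximal) {v : M}
    (hv : v ≠ 0) (hpv : p • v = 0) : Ideal.torsionOf R M v = Ideal.span {p} := by
  refine (hp.eq_of_le ?_ ?_).symm
  · rwa [Ne, Ideal.eq_top_iff_one, Ideal.mem_torsionOf_iff, one_smul]
  · rwa [Ideal.span_singleton_le_iff_mem, Ideal.mem_torsionOf_iff]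

/-- A submodule over a larger ring of a finite-dimensional space is finite-dimensional. -/
instance Submodule.finite_of_isScalarTower {F R M : Type*} [Field F] [Ring R] [Algebra F R]
    [AddCommGroup M] [Module F M] [Module R M] [IsScalarTower F R M] [Module.Finite F M]
    (S : Submodule R M) : Module.Finite F S :=
  .of_injective (S.subtype.restrictScalars F) S.injective_subtype

namespace Polynomial

section

variable {F M N : Type*} [Field F] [AddCommGroup M] [Module F M] [Module F[X] M]
  [IsScalarTower F F[X] M] [Module.Finite F M]
  [AddCommGroup N] [Module F N] [Module F[X] N] [IsScalarTower F F[X] N] [Module.Finite F N]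

theorem charpoly_lsmul_X_congr (e : M ≃ₗ[F[X]] N) :
    (Algebra.lsmul F F M (X : F[X])).charpoly = (Algebra.lsmul F F N (X : F[X])).charpoly := by
  rw [← LinearEquiv.charpoly_conj (e.restrictScalars F)]
  congr 1
  ext x
  simp [LinearEquiv.conj_apply]

theorem charpoly_lsmul_X_of_isCompl_s18 {S S' : Submodule F[X] M} (h : IsCompl S S') :
    (Algebra.lsmul F F M (X : F[X])).charpoly =
      (Algebra.lsmul F F S (X : F[X])).charpoly * (Algebra.lsmul F F S' (X : F[X])).charpoly := by
  rw [← LinearMap.charpoly_prodMap,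
    ← charpoly_lsmul_X_congr (S.prodEquivOfIsCompl S' h)]
  rfl

end

/-- Finite-dimensional semisimple `F[X]`-modules are determined up to isomorphism by the
characteristic polynomial of the action of `X`. -/
theorem nonempty_linearEquiv_of_charpoly_lsmul_X_eq {F M N : Type*} [Field F]
    [AddCommGroup M] [Module F M] [Module F[X] M] [IsScalarTower F F[X] M] [Module.Finite F M]
    [IsSemisimpleModule F[X] M]
    [AddCommGroup N] [Module F N] [Module F[X] N] [IsScalarTower F F[X] N] [Module.Finite F N]
    [IsSemisimpleModule F[X] N]
    (h : (Algebra.lsmul F F M (X : F[X])).charpoly = (Algebra.lsmul F F N (X : F[X])).charpoly) :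
    Nonempty (M ≃ₗ[F[X]] N) := by
  induction hn : Module.finrank F M using Nat.strong_induction_on generalizing M N with
  | _ n ih =>
  have hrank : Module.finrank F M = Module.finrank F N := by
    rw [← LinearMap.charpoly_natDegree (Algebra.lsmul F F M (X : F[X])), h,
      LinearMap.charpoly_natDegree]
  rcases Nat.eq_zero_or_pos n with rfl | hpos
  · have := Module.finrank_zero_iff.1 hn
    have := Module.finrank_zero_iff.1 (hrank ▸ hn)
    exact ⟨0⟩
  obtain ⟨p, hp, hdvd⟩ := exists_irreducible_of_natDegree_ne_zero
    (f := (Algebra.lsmul F F M (X : F[X])).charpoly)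
    (by rw [LinearMap.charpoly_natDegree]; omega)
  have hmax : (Ideal.span {p}).IsMaximal := PrincipalIdealRing.isMaximal_of_irreducible hp
  obtain ⟨v, hv, hpv⟩ := LinearMap.exists_ne_zero_aeval_apply_eq_zero_of_dvd_charpoly _ hp hdvd
  obtain ⟨w, hw, hpw⟩ :=
    LinearMap.exists_ne_zero_aeval_apply_eq_zero_of_dvd_charpoly _ hp (h ▸ hdvd)
  rw [aeval_algHom_apply, aeval_X_left_apply, Algebra.lsmul_coe] at hpv hpw
  have e : Submodule.span F[X] {v} ≃ₗ[F[X]] Submodule.span F[X] {w} :=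
    (Ideal.quotTorsionOfEquivSpanSingleton F[X] M v).symm ≪≫ₗ
      Submodule.quotEquivOfEq _ _
        ((Ideal.torsionOf_eq_span_singleton_of_isMaximal hmax hv hpv).trans
          (Ideal.torsionOf_eq_span_singleton_of_isMaximal hmax hw hpw).symm) ≪≫ₗ
      Ideal.quotTorsionOfEquivSpanSingleton F[X] N w
  obtain ⟨M', hM'⟩ := exists_isCompl (Submodule.span F[X] {v})
  obtain ⟨N', hN'⟩ := exists_isCompl (Submodule.span F[X] {w})
  rw [charpoly_lsmul_X_of_isCompl_s18 hM', charpoly_lsmul_X_of_isCompl_s18 hN',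
    charpoly_lsmul_X_congr e] at h
  have h' := mul_left_cancel₀ (LinearMap.charpoly_monic _).ne_zero h
  have hlt : Module.finrank F M' < n := by
    have hsum := ((Submodule.prodEquivOfIsCompl _ _ hM').restrictScalars F).finrank_eq
    rw [Module.finrank_prod, hn] at hsum
    have : Nontrivial (Submodule.span F[X] {v}) :=
      (Submodule.nontrivial_iff_ne_bot).2 (by simpa using hv)
    have := Module.finrank_pos (R := F) (M := Submodule.span F[X] {v})
    omega
  obtain ⟨e'⟩ := ih _ hlt h' rfl
  exact ⟨(Submodule.prodEquivOfIsCompl _ _ hM').symm ≪≫ₗ e.prodCongr e' ≪≫ₗ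
    Submodule.prodEquivOfIsCompl _ _ hN'⟩

end Polynomial

open Polynomial Module in
/-- Semisimple endomorphisms of finite-dimensional spaces with equal characteristic polynomials
are intertwined by a linear equivalence. -/
theorem Module.End.IsSemisimple.exists_linearEquiv_of_charpoly_eq {F V W : Type*} [Field F]
    [AddCommGroup V] [Module F V] [FiniteDimensional F V]
    [AddCommGroup W] [Module F W] [FiniteDimensional F W]
    {f : Module.End F V} {g : Module.End F W} (hf : f.IsSemisimple) (hg : g.IsSemisimple)
    (h : f.charpoly = g.charpoly) : ∃ e : V ≃ₗ[F] W, ∀ v, e (f v) = g (e v) := by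
  have : IsSemisimpleModule F[X] (AEval' f) := hf
  have : IsSemisimpleModule F[X] (AEval' g) := hg
  have : Module.Finite F (AEval' f) := .equiv (AEval'.of f)
  have : Module.Finite F (AEval' g) := .equiv (AEval'.of g)
  have hf' : Algebra.lsmul F F (AEval' f) (X : F[X]) = (AEval'.of f).conj f := by
    ext x
    obtain ⟨x, rfl⟩ := (AEval'.of f).surjective x
    simp [LinearEquiv.conj_apply, AEval'.X_smul_of]
  have hg' : Algebra.lsmul F F (AEval' g) (X : F[X]) = (AEval'.of g).conj g := by
    ext x
    obtain ⟨x, rfl⟩ := (AEval'.of g).surjective x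
    simp [LinearEquiv.conj_apply, AEval'.X_smul_of]
  obtain ⟨e⟩ := nonempty_linearEquiv_of_charpoly_lsmul_X_eq (M := AEval' f) (N := AEval' g)
    (by rw [hf', hg', LinearEquiv.charpoly_conj, LinearEquiv.charpoly_conj, h])
  refine ⟨AEval'.of f ≪≫ₗ e.restrictScalars F ≪≫ₗ (AEval'.of g).symm, fun v ↦ ?_⟩
  simp [← AEval'.X_smul_of]

/-- Two semisimple matrices over a field with equal characteristic polynomials are
conjugate under `GL_n(F)`. -/
theorem stmt_18 {F : Type*} [Field F] {n : ℕ} (A B : Matrix (Fin n) (Fin n) F)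
    (hA : A.IsSemisimple) (hB : B.IsSemisimple) (h : A.charpoly = B.charpoly) :
    ∃ g : GL (Fin n) F, B = (g : Matrix (Fin n) (Fin n) F) * A *
      ((g⁻¹ : GL (Fin n) F) : Matrix (Fin n) (Fin n) F) := by
  obtain ⟨e, he⟩ := Module.End.IsSemisimple.exists_linearEquiv_of_charpoly_eq hA hB
    (by rw [Matrix.charpoly_toLin', Matrix.charpoly_toLin', h])
  let g : GL (Fin n) F := Matrix.GeneralLinearGroup.toLin.symm
    (LinearMap.GeneralLinearGroup.ofLinearEquiv e)
  have hg : Matrix.toLin' (g : Matrix (Fin n) (Fin n) F) = e := by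
    have h1 := Matrix.GeneralLinearGroup.toLin.apply_symm_apply
      (LinearMap.GeneralLinearGroup.ofLinearEquiv e)
    exact congrArg Units.val h1
  have hcomm : B * g = g * A := by
    apply Matrix.toLin'.injective
    ext1 i
    rw [Matrix.toLin'_mul, Matrix.toLin'_mul, hg]
    ext1
    simp only [LinearMap.comp_apply]
    exact (he _).symm
  exact ⟨g, by rw [← hcomm, mul_assoc, ← Units.val_mul, mul_inv_cancel, Units.val_one, mul_one]⟩
end
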